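/- Uniqueness of the stabilization function: let V > 0, μ > 0, C > 0, h > 0, D = μV, and φ₁ ≠ φ₂ with n₁ = C·exp(φ₁/V), n₂ = C·exp(φ₂/V). Then there is exactly one real number Φ such that μ·((n₁ + n₂)/2)·(−(φ₂ − φ₁)/h) + D·(1 + Φ)·(n₂ − n₁)/h = 0, and it equals B(2Pe) + Pe − 1 with Pe = |φ₂ − φ₁|/(2V). -/

import Mathlib

/-- The Bernoulli-type function `B(Z) = Z/(exp Z − 1)` for `Z ≠ 0`, with `B(0) = 1`. -/
noncomputable def sgBern (Z : ℝ) : ℝ := if Z = 0 then 1 else Z / (Real.exp Z - 1)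

/-!
With `Φ = B(z) + z/2 - 1` and `z = (φ₂ - φ₁)/V`, the stabilized flux is the Scharfetter–Gummel flux
`D/h · (B(z) n₂ - B(-z) n₁)`, because `B(-z) = B(z) + z`. That flux vanishes on equilibrium data
`n₂ = n₁ exp z`, because `B(z) exp z = B(-z)`. The stabilized flux is affine in `Φ` with slope
`D (n₂ - n₁)/h ≠ 0`, so this is its only zero, and since `B(z) + z/2` is even in `z`, the argument
may be replaced by `2 Pe = |z|`.
-/

theorem exp_sub_one_ne_zero {z : ℝ} (hz : z ≠ 0) : Real.exp z - 1 ≠ 0 :=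
  sub_ne_zero.mpr ((Real.exp_eq_one_iff z).not.mpr hz)

theorem sgBern_mul_exp_sub_one (z : ℝ) : sgBern z * (Real.exp z - 1) = z := by
  rcases eq_or_ne z 0 with rfl | hz
  · simp
  · rw [sgBern, if_neg hz, div_mul_cancel₀ _ (exp_sub_one_ne_zero hz)]

theorem sgBern_neg_eq_mul_exp (z : ℝ) : sgBern (-z) = sgBern z * Real.exp z := by
  rcases eq_or_ne z 0 with rfl | hz
  · simp
  · have hexp : Real.exp z * Real.exp (-z) = 1 := by
      rw [← Real.exp_add, add_neg_cancel, Real.exp_zero]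
    refine mul_right_cancel₀ (exp_sub_one_ne_zero (neg_ne_zero.mpr hz)) ?_
    calc sgBern (-z) * (Real.exp (-z) - 1) = -z := sgBern_mul_exp_sub_one (-z)
      _ = -(sgBern z * (Real.exp z - 1)) := by rw [sgBern_mul_exp_sub_one]
      _ = sgBern z * Real.exp z * (Real.exp (-z) - 1) := by
        linear_combination -sgBern z * hexp

theorem sgBern_neg (z : ℝ) : sgBern (-z) = sgBern z + z := by
  linear_combination sgBern_neg_eq_mul_exp z + sgBern_mul_exp_sub_one z

theorem sgBern_add_half_eq_of_abs_eq {x y : ℝ} (hxy : |x| = |y|) :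
    sgBern x + x / 2 = sgBern y + y / 2 := by
  rcases abs_eq_abs.mp hxy with rfl | rfl
  · rfl
  · rw [sgBern_neg]
    ring

/-- The stabilized drift–diffusion flux on an element of length `h` with nodal potentials `φ₁, φ₂`
and nodal densities `n₁, n₂`: the density is averaged in the drift term, and the diffusion
coefficient `D` is replaced by `D * (1 + Φ)`. -/
noncomputable def stabilizedFlux (μ D h φ₁ φ₂ n₁ n₂ Φ : ℝ) : ℝ :=
  μ * ((n₁ + n₂) / 2) * (-(φ₂ - φ₁) / h) + D * (1 + Φ) * ((n₂ - n₁) / h)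

/-- The Scharfetter–Gummel flux on an element of length `h`, where `z` is the potential difference
in units of the thermal voltage; the sign is that of the diffusive term `D * (n₂ - n₁) / h`. -/
noncomputable def scharfetterGummelFlux (D h z n₁ n₂ : ℝ) : ℝ :=
  D / h * (sgBern z * n₂ - sgBern (-z) * n₁)

theorem scharfetterGummelFlux_mul_exp (D h z n : ℝ) :
    scharfetterGummelFlux D h z n (n * Real.exp z) = 0 := by
  rw [scharfetterGummelFlux, sgBern_neg_eq_mul_exp]
  ring

theorem stabilizedFlux_sgBern {V z φ₁ φ₂ : ℝ} (hz : φ₂ - φ₁ = V * z) (μ h n₁ n₂ : ℝ) :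
    stabilizedFlux μ (μ * V) h φ₁ φ₂ n₁ n₂ (sgBern z + z / 2 - 1) =
      scharfetterGummelFlux (μ * V) h z n₁ n₂ := by
  rw [stabilizedFlux, scharfetterGummelFlux, sgBern_neg, hz]
  ring

theorem stabilizedFlux_injective {D h n₁ n₂ : ℝ} (hD : D ≠ 0) (hh : h ≠ 0) (hn : n₁ ≠ n₂)
    (μ φ₁ φ₂ : ℝ) : Function.Injective (stabilizedFlux μ D h φ₁ φ₂ n₁ n₂) := by
  intro Φ Ψ hΦΨ
  have hslope : (n₂ - n₁) / h ≠ 0 := div_ne_zero (sub_ne_zero.mpr hn.symm) hh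
  exact add_left_cancel (mul_left_cancel₀ hD (mul_right_cancel₀ hslope (add_left_cancel hΦΨ)))

theorem sg_stabilization_unique_general {V μ C h D φ₁ φ₂ n₁ n₂ Pe : ℝ}
    (hV : V ≠ 0) (hμ : μ ≠ 0) (hC : C ≠ 0) (hh : h ≠ 0) (hD : D = μ * V) (hφ : φ₁ ≠ φ₂)
    (hn₁ : n₁ = C * Real.exp (φ₁ / V)) (hn₂ : n₂ = C * Real.exp (φ₂ / V))
    (hPe : Pe = |φ₂ - φ₁| / (2 * V)) (Φ : ℝ) :
    stabilizedFlux μ D h φ₁ φ₂ n₁ n₂ Φ = 0 ↔ Φ = sgBern (2 * Pe) + Pe - 1 := by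
  set z := (φ₂ - φ₁) / V with hz
  have hdrop : φ₂ - φ₁ = V * z := (mul_div_cancel₀ _ hV).symm
  have hratio : n₂ = n₁ * Real.exp z := by
    rw [hn₁, hn₂, mul_assoc, ← Real.exp_add, hz, ← add_div, add_sub_cancel]
  have hne : n₁ ≠ n₂ := by
    rw [hn₁, hn₂]
    exact fun heq => hφ ((div_left_inj' hV).mp (Real.exp_injective (mul_left_cancel₀ hC heq)))
  have habs : |2 * Pe| = |z| := by
    rw [hPe, ← mul_div_assoc, mul_div_mul_left _ _ two_ne_zero, hz, abs_div, abs_div, abs_abs]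
  have hPe_eq : sgBern (2 * Pe) + Pe - 1 = sgBern z + z / 2 - 1 := by
    linear_combination sgBern_add_half_eq_of_abs_eq habs
  have hzero : stabilizedFlux μ D h φ₁ φ₂ n₁ n₂ (sgBern z + z / 2 - 1) = 0 := by
    rw [hD, stabilizedFlux_sgBern hdrop, hratio, scharfetterGummelFlux_mul_exp]
  have hD_ne : D ≠ 0 := hD ▸ mul_ne_zero hμ hV
  rw [hPe_eq, ← hzero, (stabilizedFlux_injective hD_ne hh hne μ φ₁ φ₂).eq_iff]

/-- Uniqueness of the stabilization function: on thermal-equilibrium nodal data there is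
exactly one real number `Φ` making the stabilized 1D flux vanish, and it equals
`B(2Pe) + Pe − 1` with `Pe = |φ₂ − φ₁|/(2V)`. -/
theorem sg_stabilization_unique
    (V μ C h D φ₁ φ₂ n₁ n₂ Pe : ℝ)
    (hV : 0 < V) (hμ : 0 < μ) (hC : 0 < C) (hh : 0 < h) (hD : D = μ * V)
    (hφ : φ₁ ≠ φ₂)
    (hn₁ : n₁ = C * Real.exp (φ₁ / V)) (hn₂ : n₂ = C * Real.exp (φ₂ / V))
    (hPe : Pe = |φ₂ - φ₁| / (2 * V)) :
    (∃! Φ : ℝ,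
      μ * ((n₁ + n₂) / 2) * (-(φ₂ - φ₁) / h) +
          D * (1 + Φ) * ((n₂ - n₁) / h) = 0) ∧
    (∀ Φ : ℝ,
      μ * ((n₁ + n₂) / 2) * (-(φ₂ - φ₁) / h) +
          D * (1 + Φ) * ((n₂ - n₁) / h) = 0 →
      Φ = sgBern (2 * Pe) + Pe - 1) := by
  have key := sg_stabilization_unique_general hV.ne' hμ.ne' hC.ne' hh.ne' hD hφ hn₁ hn₂ hPe
  exact ⟨⟨_, (key _).mpr rfl, fun Φ => (key Φ).mp⟩, fun Φ => (key Φ).mp⟩
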